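/- Let t ≥ 1, k ≥ t+2 and n ≥ 2k be integers satisfying the inequality Σ_{ℓ=t+2}^{k} ℓ²·(k−t+1)^{ℓ−t−1} · (Σ_{i=t}^{ℓ} C(ℓ,i)) · (Σ_{j=0}^{k−ℓ} C(n,j)) ≤ C(n−t−1, k−t−1) + ((t+2)(t+1)−4)/2 · C(n−t−2, k−t−1) + ((t+3)(t+2)−8)/2 · Σ_{j=0}^{k−t−2} C(n−t−2, j) + Σ_{j=0}^{k−t−3} C(n−t−2, j). Then every t-intersecting family F ⊆ binom([n],k) satisfies |I(F)| ≤ |I(A_t)|, where A_t = {A ∈ binom([n],k) : |A ∩ {1,…,t+2}| ≥ t+1} and C(a,b) denotes the binomial coefficient a choose b. -/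

import Mathlib

open Finset

/-- The collection of distinct intersections `{F ∩ G : F, G ∈ 𝓕, F ≠ G}`. -/
def interFam (F : Finset (Finset ℕ)) : Finset (Finset ℕ) :=
  ((F ×ˢ F).filter fun p => p.1 ≠ p.2).image fun p => p.1 ∩ p.2

/-- A family is `t`-intersecting if any two members meet in at least `t` elements. -/
def tIntersecting (t : ℕ) (F : Finset (Finset ℕ)) : Prop :=
  ∀ A ∈ F, ∀ B ∈ F, t ≤ (A ∩ B).card

/-- The family `𝓐_t = {A ∈ [n]^(k) : |A ∩ {1,…,t+2}| ≥ t+1}`. -/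
def At (n k t : ℕ) : Finset (Finset ℕ) :=
  ((Finset.Icc 1 n).powersetCard k).filter fun A => t + 1 ≤ (A ∩ Finset.Icc 1 (t + 2)).card

/-- A `t`-intersecting family `F ⊆ [n]^(k)` is saturated if no `k`-set outside `F`
can be added keeping the `t`-intersecting property. -/
def saturated (n k t : ℕ) (F : Finset (Finset ℕ)) : Prop :=
  ∀ G ∈ (Finset.Icc 1 n).powersetCard k, G ∉ F → ¬ tIntersecting t (insert G F)

/-- The family of `t`-transversals `T(F)`. -/
def transv (n k t : ℕ) (F : Finset (Finset ℕ)) : Finset (Finset ℕ) :=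
  (Finset.Icc 1 n).powerset.filter fun T => T.card ≤ k ∧ ∀ A ∈ F, t ≤ (T ∩ A).card

/-- The minimal members (under inclusion) of a family. -/
def minFam (S : Finset (Finset ℕ)) : Finset (Finset ℕ) :=
  S.filter fun B => ∀ B' ∈ S, B' ⊆ B → B' = B

lemma count_pairs (U Y : Finset ℕ) (hY : Y ⊆ U) (P : Finset (ℕ × ℕ)) :
    (U.powerset.filter fun X => ((X ∩ Y).card, (X \ Y).card) ∈ P).card
      = ∑ p ∈ P, Y.card.choose p.1 * (U.card - Y.card).choose p.2 := by
  rw [Finset.card_eq_sum_card_fiberwise (t := P)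
    (f := fun X => ((X ∩ Y).card, (X \ Y).card))]
  · apply Finset.sum_congr rfl
    rintro ⟨i, j⟩ hp
    have h1 : ((Y.powersetCard i) ×ˢ ((U \ Y).powersetCard j)).card
        = Y.card.choose i * (U.card - Y.card).choose j := by
      rw [Finset.card_product, Finset.card_powersetCard, Finset.card_powersetCard,
        Finset.card_sdiff_of_subset hY]
    rw [← h1]
    apply Finset.card_bij' (fun X _ => (X ∩ Y, X \ Y)) (fun p _ => p.1 ∪ p.2)
    · intro X hX
      simp only [Finset.mem_filter, Finset.mem_powerset, Prod.mk.injEq] at hX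
      simp only [Finset.mem_product, Finset.mem_powersetCard]
      refine ⟨⟨Finset.inter_subset_right, hX.2.1⟩, Finset.sdiff_subset_sdiff hX.1.1 (le_refl _), hX.2.2⟩
    · rintro ⟨A, B⟩ hX
      simp only [Finset.mem_product, Finset.mem_powersetCard] at hX
      obtain ⟨⟨hA, hA'⟩, hB, hB'⟩ := hX
      have e1 : (A ∪ B) ∩ Y = A := by
        ext x; have := @hA x; have := @hB x
        simp only [Finset.mem_sdiff, Finset.mem_inter, Finset.mem_union] at *; tauto
      have e2 : (A ∪ B) \ Y = B := by
        ext x; have := @hA x; have := @hB x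
        simp only [Finset.mem_sdiff, Finset.mem_inter, Finset.mem_union] at *; tauto
      simp only [Finset.mem_filter, Finset.mem_powerset, e1, e2, hA', hB']
      exact ⟨⟨Finset.union_subset (hA.trans hY) (hB.trans Finset.sdiff_subset), hp⟩, trivial⟩
    · intro X hX
      simp only
      ext x; simp only [Finset.mem_sdiff, Finset.mem_inter, Finset.mem_union]; tauto
    · rintro ⟨A, B⟩ hX
      simp only [Finset.mem_product, Finset.mem_powersetCard] at hX
      obtain ⟨⟨hA, hA'⟩, hB, hB'⟩ := hX
      simp only [Prod.mk.injEq]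
      constructor
      · ext x; have := @hA x; have := @hB x
        simp only [Finset.mem_sdiff, Finset.mem_inter, Finset.mem_union] at *; tauto
      · ext x; have := @hA x; have := @hB x
        simp only [Finset.mem_sdiff, Finset.mem_inter, Finset.mem_union] at *; tauto
  · intro X hX
    simp only [Finset.coe_filter, Set.mem_setOf_eq] at hX
    exact hX.2

lemma count_prod (U Y : Finset ℕ) (hY : Y ⊆ U) (I J : Finset ℕ) :
    (U.powerset.filter fun X => (X ∩ Y).card ∈ I ∧ (X \ Y).card ∈ J).card
      = (∑ i ∈ I, Y.card.choose i) * ∑ j ∈ J, (U.card - Y.card).choose j := by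
  rw [Finset.sum_mul_sum, ← Finset.sum_product', ← count_pairs U Y hY (I ×ˢ J)]
  simp only [Finset.mem_product]

/-- The intersection pattern family determined by a `(t+2)`-set `Y`. -/
def patt (n k t : ℕ) (Y : Finset ℕ) : Finset (Finset ℕ) :=
  (Finset.Icc 1 n).powerset.filter fun X =>
    t ≤ (X ∩ Y).card ∧ (X \ Y).card + t + 1 ≤ k ∧ (X ∩ Y).card + (X \ Y).card + 1 ≤ k

lemma patt_card (n k t : ℕ) (hk : t + 2 ≤ k) (Y : Finset ℕ) (hY : Y ⊆ Finset.Icc 1 n)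
    (hYc : Y.card = t + 2) :
    (patt n k t Y).card = (t + 2).choose 2 * ∑ j ∈ Finset.range (k - t), (n - t - 2).choose j
      + (t + 2) * ∑ j ∈ Finset.range (k - t - 1), (n - t - 2).choose j
      + ∑ j ∈ Finset.range (k - t - 2), (n - t - 2).choose j := by
  have key : patt n k t Y = (Finset.Icc 1 n).powerset.filter fun X =>
      ((X ∩ Y).card, (X \ Y).card) ∈
        (({t} : Finset ℕ) ×ˢ Finset.range (k - t)) ∪ ((({t + 1} : Finset ℕ) ×ˢ Finset.range (k - t - 1))
          ∪ (({t + 2} : Finset ℕ) ×ˢ Finset.range (k - t - 2))) := by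
    unfold patt
    apply Finset.filter_congr
    intro X _
    have : (X ∩ Y).card ≤ t + 2 := hYc ▸ Finset.card_le_card Finset.inter_subset_right
    simp only [Finset.mem_union, Finset.mem_product, Finset.mem_singleton, Finset.mem_range]
    omega
  rw [key, count_pairs _ _ hY, Finset.sum_union, Finset.sum_union, Finset.sum_product,
    Finset.sum_product, Finset.sum_product]
  · have a1 : (t + 2).choose t = (t + 2).choose 2 := by
      have := Nat.choose_symm_add (a := t) (b := 2); simpa using this
    have a2 : (t + 2).choose (t + 1) = t + 2 := by
      have := Nat.choose_succ_self_right (t + 1); simpa using this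
    simp only [Finset.sum_singleton, hYc, Nat.card_Icc, ← Finset.mul_sum, a1, a2, Nat.choose_self]
    have : n + 1 - 1 - (t + 2) = n - t - 2 := by omega
    rw [this]; ring
  · rw [Finset.disjoint_left]; rintro ⟨i, j⟩ h1 h2
    simp only [Finset.mem_union, Finset.mem_product, Finset.mem_singleton, Finset.mem_range] at h1 h2
    omega
  · rw [Finset.disjoint_left]; rintro ⟨i, j⟩ h1 h2
    simp only [Finset.mem_union, Finset.mem_product, Finset.mem_singleton, Finset.mem_range] at h1 h2
    omega

lemma card_split (X Y : Finset ℕ) : (X ∩ Y).card + (X \ Y).card = X.card := by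
  rw [add_comm]; exact Finset.card_sdiff_add_card_inter X Y

lemma inter_card_lt (k : ℕ) (A B : Finset ℕ) (hA : A.card = k) (hB : B.card = k) (h : A ≠ B) :
    (A ∩ B).card + 1 ≤ k := by
  by_contra hc
  have h1 : A ∩ B = A := Finset.eq_of_subset_of_card_le Finset.inter_subset_left (by omega)
  have h2 : A ∩ B = B := Finset.eq_of_subset_of_card_le Finset.inter_subset_right (by omega)
  exact h (h1.symm.trans h2)

lemma two_picks (V : Finset ℕ) (a b : ℕ) (h : a + b ≤ V.card) :
    ∃ E1 E2 : Finset ℕ, E1 ⊆ V ∧ E2 ⊆ V ∧ Disjoint E1 E2 ∧ E1.card = a ∧ E2.card = b := by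
  obtain ⟨E1, h1, h2⟩ := Finset.exists_subset_card_eq (s := V) (n := a) (by omega)
  have : b ≤ (V \ E1).card := by rw [Finset.card_sdiff_of_subset h1]; omega
  obtain ⟨E2, h3, h4⟩ := Finset.exists_subset_card_eq this
  exact ⟨E1, E2, h1, h3.trans Finset.sdiff_subset,
    (Finset.disjoint_sdiff.mono_right h3), h2, h4⟩

/-- Extending two sets to `k`-sets keeping the intersection. -/
lemma extend_two (U P Q Y : Finset ℕ) (k : ℕ) (hP : P ⊆ U) (hQ : Q ⊆ U)
    (hPk : P.card ≤ k) (hQk : Q.card ≤ k)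
    (hc : 2 * k + (P ∪ Q ∪ Y).card ≤ U.card + P.card + Q.card) (hY : Y ⊆ U) :
    ∃ A B : Finset ℕ, A ⊆ U ∧ B ⊆ U ∧ A.card = k ∧ B.card = k ∧ P ⊆ A ∧ Q ⊆ B ∧ A ∩ B = P ∩ Q := by
  have hsub : P ∪ Q ∪ Y ⊆ U := Finset.union_subset (Finset.union_subset hP hQ) hY
  obtain ⟨E1, E2, h1, h2, h3, h4, h5⟩ := two_picks (U \ (P ∪ Q ∪ Y)) (k - P.card) (k - Q.card)
    (by rw [Finset.card_sdiff_of_subset hsub]; have := Finset.card_le_card hsub; omega)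
  have d1 : Disjoint P E1 := by
    rw [Finset.disjoint_left]; intro x hx hx'
    have := h1 hx'; simp only [Finset.mem_sdiff, Finset.mem_union] at this; tauto
  have d2 : Disjoint Q E2 := by
    rw [Finset.disjoint_left]; intro x hx hx'
    have := h2 hx'; simp only [Finset.mem_sdiff, Finset.mem_union] at this; tauto
  refine ⟨P ∪ E1, Q ∪ E2, Finset.union_subset hP (h1.trans Finset.sdiff_subset),
    Finset.union_subset hQ (h2.trans Finset.sdiff_subset), ?_, ?_, Finset.subset_union_left,
    Finset.subset_union_left, ?_⟩
  · rw [Finset.card_union_of_disjoint d1]; omega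
  · rw [Finset.card_union_of_disjoint d2]; omega
  · ext x
    have a1 := @h1 x; have a2 := @h2 x
    have a3 : x ∈ E1 → x ∉ E2 := fun h h' => Finset.disjoint_left.mp h3 h h'
    simp only [Finset.mem_sdiff, Finset.mem_inter, Finset.mem_union] at *; tauto

lemma patt_sub_At (n k t : ℕ) (hk : t + 2 ≤ k) (hn : 2 * k ≤ n) :
    patt n k t (Finset.Icc 1 (t + 2)) ⊆ interFam (At n k t) := by
  intro X hX
  simp only [patt, Finset.mem_filter, Finset.mem_powerset] at hX
  obtain ⟨hXU, h1, h2, h3⟩ := hX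
  set U := Finset.Icc 1 n with hU
  set Y := Finset.Icc 1 (t + 2) with hY
  have hYU : Y ⊆ U := Finset.Icc_subset_Icc_right (by omega)
  have hYc : Y.card = t + 2 := by simp [hY]
  have hUc : U.card = n := by simp [hU]
  have hs := card_split X Y
  have main : ∃ P Q : Finset ℕ, P ⊆ U ∧ Q ⊆ U ∧ P.card ≤ k ∧ Q.card ≤ k ∧
      2 * k + (P ∪ Q ∪ Y).card ≤ U.card + P.card + Q.card ∧ P ∩ Q = X ∧
      t + 1 ≤ (P ∩ Y).card ∧ t + 1 ≤ (Q ∩ Y).card := by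
    have hYX : (Y \ X).card + (X ∩ Y).card = t + 2 := by
      rw [← hYc, Finset.inter_comm]; exact Finset.card_sdiff_add_card_inter Y X
    by_cases hc : t + 1 ≤ (X ∩ Y).card
    · refine ⟨X, X, hXU, hXU, by omega, by omega, ?_, Finset.inter_self X, hc, hc⟩
      have : (X ∪ X ∪ Y).card = (X \ Y).card + Y.card := by
        rw [Finset.union_self, ← Finset.sdiff_union_self_eq_union,
          Finset.card_union_of_disjoint Finset.sdiff_disjoint]
      omega
    · obtain ⟨a, b, ha, hb, hab⟩ : ∃ a b, a ∈ Y \ X ∧ b ∈ Y \ X ∧ a ≠ b :=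
        Finset.one_lt_card_iff.mp (by omega)
      simp only [Finset.mem_sdiff] at ha hb
      have ca : (insert a X).card = X.card + 1 := Finset.card_insert_of_notMem ha.2
      have cb : (insert b X).card = X.card + 1 := Finset.card_insert_of_notMem hb.2
      refine ⟨insert a X, insert b X, ?_, ?_, by omega, by omega, ?_, ?_, ?_, ?_⟩
      · exact Finset.insert_subset (hYU ha.1) hXU
      · exact Finset.insert_subset (hYU hb.1) hXU
      · have : insert a X ∪ insert b X ∪ Y = (X \ Y) ∪ Y := by
          ext x; simp only [Finset.mem_union, Finset.mem_insert, Finset.mem_sdiff]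
          constructor
          · rintro ((((rfl | h) | (rfl | h)) | h)) <;> tauto
          · tauto
        rw [this, Finset.card_union_of_disjoint Finset.sdiff_disjoint]; omega
      · ext x; simp only [Finset.mem_inter, Finset.mem_insert]
        constructor
        · rintro ⟨rfl | h, rfl | h'⟩ <;> tauto
        · tauto
      · rw [Finset.insert_inter_of_mem ha.1, Finset.card_insert_of_notMem (by simp [ha.2])]; omega
      · rw [Finset.insert_inter_of_mem hb.1, Finset.card_insert_of_notMem (by simp [hb.2])]; omega
  obtain ⟨P, Q, hP, hQ, hPk, hQk, hc, hPQ, hPY, hQY⟩ := main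
  obtain ⟨A, B, hA, hB, hAk, hBk, hPA, hQB, hAB⟩ := extend_two U P Q Y k hP hQ hPk hQk hc hYU
  unfold interFam At
  simp only [Finset.mem_image, Finset.mem_filter, Finset.mem_product, Finset.mem_powersetCard,
    Prod.exists]
  refine ⟨A, B, ⟨⟨⟨⟨hA, hAk⟩, ?_⟩, ⟨hB, hBk⟩, ?_⟩, ?_⟩, hAB.trans hPQ⟩
  · exact hPY.trans (Finset.card_le_card (Finset.inter_subset_inter_right hPA))
  · exact hQY.trans (Finset.card_le_card (Finset.inter_subset_inter_right hQB))
  · rintro rfl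
    rw [Finset.inter_self, hPQ] at hAB
    rw [hAB] at hAk; omega

lemma exists_sat (n k t : ℕ) (hk : t ≤ k) (F : Finset (Finset ℕ))
    (hF : F ⊆ (Finset.Icc 1 n).powersetCard k) (hT : tIntersecting t F) :
    ∃ F' ⊆ (Finset.Icc 1 n).powersetCard k, F ⊆ F' ∧ tIntersecting t F' ∧
      ∀ G ∈ (Finset.Icc 1 n).powersetCard k, (∀ A ∈ F', t ≤ (G ∩ A).card) → G ∈ F' := by
  classical
  let S := ((Finset.Icc 1 n).powersetCard k).powerset.filter fun H => F ⊆ H ∧ tIntersecting t H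
  have hS : S.Nonempty := ⟨F, by simp [S, hF, hT]⟩
  obtain ⟨F', hF', hmax⟩ := Finset.exists_max_image S Finset.card hS
  simp only [S, Finset.mem_filter, Finset.mem_powerset] at hF'
  refine ⟨F', hF'.1, hF'.2.1, hF'.2.2, ?_⟩
  intro G hG hGA
  by_contra hn
  have : insert G F' ∈ S := by
    simp only [S, Finset.mem_filter, Finset.mem_powerset]
    refine ⟨Finset.insert_subset hG hF'.1, hF'.2.1.trans (Finset.subset_insert _ _), ?_⟩
    intro A hA B hB
    rw [Finset.mem_insert] at hA hB
    rcases hA with rfl | hA <;> rcases hB with rfl | hB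
    · rw [Finset.inter_self, (Finset.mem_powersetCard.mp hG).2]; exact hk
    · exact hGA B hB
    · rw [Finset.inter_comm]; exact hGA A hA
    · exact hF'.2.2 A hA B hB
  have := hmax _ this
  rw [Finset.card_insert_of_notMem hn] at this
  omega

lemma interFam_mono {F G : Finset (Finset ℕ)} (h : F ⊆ G) : interFam F ⊆ interFam G := by
  unfold interFam
  apply Finset.image_subset_image
  apply Finset.filter_subset_filter
  exact Finset.product_subset_product h h

lemma transv_inter (n k t : ℕ) (hn : 2 * k ≤ n) (F : Finset (Finset ℕ))
    (hT : tIntersecting t F)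
    (hsat : ∀ G ∈ (Finset.Icc 1 n).powersetCard k, (∀ A ∈ F, t ≤ (G ∩ A).card) → G ∈ F)
    (P Q : Finset ℕ) (hP : P ∈ transv n k t F) (hQ : Q ∈ transv n k t F) :
    t ≤ (P ∩ Q).card := by
  simp only [transv, Finset.mem_filter, Finset.mem_powerset] at hP hQ
  obtain ⟨hPU, hPk, hPA⟩ := hP
  obtain ⟨hQU, hQk, hQA⟩ := hQ
  obtain ⟨A, B, hA, hB, hAk, hBk, hPA', hQB, hAB⟩ := extend_two (Finset.Icc 1 n) P Q ∅ k hPU hQU hPk hQk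
    (by have := Finset.card_union_le P Q
        simp only [Finset.union_empty, Nat.card_Icc]; omega) (Finset.empty_subset _)
  rw [← hAB]
  apply hT
  · apply hsat _ (Finset.mem_powersetCard.mpr ⟨hA, hAk⟩)
    intro D hD
    exact (hPA D hD).trans (Finset.card_le_card (Finset.inter_subset_inter_right hPA'))
  · apply hsat _ (Finset.mem_powersetCard.mpr ⟨hB, hBk⟩)
    intro D hD
    exact (hQA D hD).trans (Finset.card_le_card (Finset.inter_subset_inter_right hQB))

lemma exists_minFam (S : Finset (Finset ℕ)) (A : Finset ℕ) (hA : A ∈ S) :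
    ∃ B ∈ minFam S, B ⊆ A := by
  obtain ⟨B, hB, hmin⟩ := Finset.exists_min_image (S.filter fun B => B ⊆ A) Finset.card
    ⟨A, by simp [hA]⟩
  simp only [Finset.mem_filter] at hB
  refine ⟨B, ?_, hB.2⟩
  simp only [minFam, Finset.mem_filter]
  refine ⟨hB.1, fun B' hB' hs => ?_⟩
  exact Finset.eq_of_subset_of_card_le hs (hmin B' (by simp [hB', hs.trans hB.2]))

/-- One branching step. -/
lemma branch_step (W : Finset (Finset ℕ)) (S A : Finset ℕ) (c M : ℕ) (hc : A.card ≤ c)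
    (hA : ∀ B ∈ W, S ⊆ B → (B ∩ A).Nonempty)
    (hM : ∀ x ∈ A, (W.filter fun B => insert x S ⊆ B).card ≤ M) :
    (W.filter fun B => S ⊆ B).card ≤ c * M := by
  have : (W.filter fun B => S ⊆ B) ⊆ A.biUnion fun x => W.filter fun B => insert x S ⊆ B := by
    intro B hB
    simp only [Finset.mem_filter, Finset.mem_biUnion] at hB ⊢
    obtain ⟨x, hx⟩ := hA B hB.1 hB.2
    rw [Finset.mem_inter] at hx
    exact ⟨x, hx.2, hB.1, Finset.insert_subset hx.1 hB.2⟩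
  calc _ ≤ _ := Finset.card_le_card this
    _ ≤ A.card * M := Finset.card_biUnion_le_card_mul _ _ _ hM
    _ ≤ c * M := Nat.mul_le_mul_right _ hc

/-- A set `A` with too small intersection with `S` yields few branches. -/
lemma branch_set (t : ℕ) (ht : 1 ≤ t) (S A : Finset ℕ) (hA : t ≤ A.card) (hS : (S ∩ A).card < t) :
    ∃ A' ⊆ A, A'.card = A.card - t + 1 ∧ Disjoint A' S ∧
      ∀ B : Finset ℕ, t ≤ (B ∩ A).card → (B ∩ A').Nonempty := by
  have h1 : A.card - t + 1 ≤ (A \ S).card := by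
    have := card_split A S
    rw [Finset.inter_comm] at this
    omega
  obtain ⟨A', h2, h3⟩ := Finset.exists_subset_card_eq h1
  refine ⟨A', h2.trans Finset.sdiff_subset, h3, Finset.sdiff_disjoint.mono_left h2, ?_⟩
  intro B hB
  by_contra hne
  rw [Finset.not_nonempty_iff_eq_empty] at hne
  have : B ∩ A ⊆ A \ A' := by
    intro x hx
    rw [Finset.mem_inter] at hx
    rw [Finset.mem_sdiff]
    refine ⟨hx.2, fun hx' => ?_⟩
    have : x ∈ B ∩ A' := Finset.mem_inter.mpr ⟨hx.1, hx'⟩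
    rw [hne] at this; simp at this
  have := Finset.card_le_card this
  rw [Finset.card_sdiff_of_subset (h2.trans Finset.sdiff_subset)] at this
  omega

/-- minimal transversals of size `l`. -/
def minT (n k t : ℕ) (F : Finset (Finset ℕ)) (l : ℕ) : Finset (Finset ℕ) :=
  (minFam (transv n k t F)).filter fun B => B.card = l

lemma branch_main (n k t : ℕ) (ht : 1 ≤ t) (hk : t ≤ k) (F : Finset (Finset ℕ))
    (hF : F ⊆ (Finset.Icc 1 n).powersetCard k) (l : ℕ) :
    ∀ r : ℕ, ∀ S : Finset ℕ, S.card + r = l →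
      ((minT n k t F l).filter fun B => S ⊆ B).card ≤ (k - t + 1) ^ r := by
  intro r
  induction r with
  | zero =>
    intro S hS
    rw [pow_zero, Finset.card_le_one]
    have : ∀ B ∈ (minT n k t F l).filter fun B => S ⊆ B, S = B := by
      intro B hB
      simp only [minT, Finset.mem_filter] at hB
      exact Finset.eq_of_subset_of_card_le hB.2 (by omega)
    intro B hB B' hB'
    rw [← this B hB, ← this B' hB']
  | succ r ih =>
    intro S hS
    rcases Finset.eq_empty_or_nonempty ((minT n k t F l).filter fun B => S ⊆ B) with he | ⟨B, hB⟩
    · rw [he]; simp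
    simp only [minT, minFam, Finset.mem_filter] at hB
    obtain ⟨⟨⟨hB1, hB2⟩, hB3⟩, hB4⟩ := hB
    have hnot : S ∉ transv n k t F := by
      intro h
      have := hB2 S h hB4
      rw [this] at hS; omega
    have hB1' := hB1
    simp only [transv, Finset.mem_filter, Finset.mem_powerset] at hnot hB1'
    have : ∃ A ∈ F, (S ∩ A).card < t := by
      by_contra hc
      push Not at hc
      exact hnot ⟨hB4.trans hB1'.1, by omega, hc⟩
    obtain ⟨A, hA, hSA⟩ := this
    have hAk := (Finset.mem_powersetCard.mp (hF hA)).2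
    obtain ⟨A', hA', hA'c, hA'S, hA'B⟩ := branch_set t ht S A (by omega) hSA
    rw [pow_succ, mul_comm]
    apply branch_step _ S A' _ _ (by omega)
    · intro D hD _
      apply hA'B
      have hDT := (Finset.mem_filter.mp (Finset.mem_filter.mp hD).1).1
      exact (Finset.mem_filter.mp hDT).2.2 A hA
    · intro x hx
      apply ih
      rw [Finset.card_insert_of_notMem (Finset.disjoint_left.mp hA'S hx)]
      omega

/-- Minimal transversals of size at most `l` share a common `t`-set. -/
def common (n k t : ℕ) (F : Finset (Finset ℕ)) (l : ℕ) : Prop :=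
  ∃ C : Finset ℕ, C.card = t ∧ ∀ B ∈ minFam (transv n k t F), B.card ≤ l → C ⊆ B

lemma branch_low (n k t : ℕ) (ht : 1 ≤ t) (hk : t ≤ k) (F : Finset (Finset ℕ))
    (hF : F ⊆ (Finset.Icc 1 n).powersetCard k)
    (hint : ∀ P ∈ transv n k t F, ∀ Q ∈ transv n k t F, t ≤ (P ∩ Q).card)
    (l : ℕ) (hl : t + 1 ≤ l) (hc : ¬ common n k t F l) (S : Finset ℕ) (hS : S.card = t) :
    ((minT n k t F l).filter fun B => S ⊆ B).card ≤ (l - t + 1) * (k - t + 1) ^ (l - t - 1) := by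
  have : ∃ D ∈ minFam (transv n k t F), D.card ≤ l ∧ ¬ S ⊆ D := by
    by_contra h
    push Not at h
    exact hc ⟨S, hS, h⟩
  obtain ⟨D, hD, hDl, hSD⟩ := this
  have hDT : D ∈ transv n k t F := (Finset.mem_filter.mp hD).1
  have hDt : t ≤ D.card := by have := hint D hDT D hDT; rwa [Finset.inter_self] at this
  have hlt : (S ∩ D).card < t := by
    by_contra h
    exact hSD (Finset.inter_eq_left.mp
      (Finset.eq_of_subset_of_card_le Finset.inter_subset_left (by omega)))
  obtain ⟨A', hA', hA'c, hA'S, hA'B⟩ := branch_set t ht S D hDt hlt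
  apply branch_step _ S A' _ _ (by omega)
  · intro B hB _
    apply hA'B
    exact hint B (Finset.mem_filter.mp (Finset.mem_filter.mp hB).1).1 D hDT
  · intro x hx
    apply branch_main n k t ht hk F hF
    rw [Finset.card_insert_of_notMem (Finset.disjoint_left.mp hA'S hx)]
    omega

/-- Counting by choosing an `m`-subset of `D`. -/
lemma choose_step (W : Finset (Finset ℕ)) (D : Finset ℕ) (m M : ℕ)
    (hD : ∀ B ∈ W, m ≤ (B ∩ D).card)
    (hM : ∀ S ⊆ D, S.card = m → (W.filter fun B => S ⊆ B).card ≤ M) :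
    W.card ≤ D.card.choose m * M := by
  have : W ⊆ (D.powersetCard m).biUnion fun S => W.filter fun B => S ⊆ B := by
    intro B hB
    obtain ⟨S, h1, h2⟩ := Finset.exists_subset_card_eq (hD B hB)
    simp only [Finset.mem_filter, Finset.mem_biUnion, Finset.mem_powersetCard]
    exact ⟨S, ⟨h1.trans Finset.inter_subset_right, h2⟩, hB, h1.trans Finset.inter_subset_left⟩
  calc _ ≤ _ := Finset.card_le_card this
    _ ≤ (D.powersetCard m).card * M := Finset.card_biUnion_le_card_mul _ _ _ (by
        intro S hS
        rw [Finset.mem_powersetCard] at hS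
        exact hM S hS.1 hS.2)
    _ = _ := by rw [Finset.card_powersetCard]

lemma bound_gen (n k t : ℕ) (ht : 1 ≤ t) (hk : t ≤ k) (F : Finset (Finset ℕ))
    (hF : F ⊆ (Finset.Icc 1 n).powersetCard k)
    (hint : ∀ P ∈ transv n k t F, ∀ Q ∈ transv n k t F, t ≤ (P ∩ Q).card)
    (l : ℕ) (hl : t + 1 ≤ l) (hc : ¬ common n k t F l) :
    (minT n k t F l).card ≤ l.choose t * ((l - t + 1) * (k - t + 1) ^ (l - t - 1)) := by
  rcases Finset.eq_empty_or_nonempty (minT n k t F l) with he | ⟨D, hD⟩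
  · rw [he]; simp
  have hDl : D.card = l := (Finset.mem_filter.mp hD).2
  have hDT : D ∈ transv n k t F := (Finset.mem_filter.mp (Finset.mem_filter.mp hD).1).1
  rw [← hDl]
  rw [hDl]
  have := choose_step (minT n k t F l) D t ((l - t + 1) * (k - t + 1) ^ (l - t - 1))
    (fun B hB => hint B (Finset.mem_filter.mp (Finset.mem_filter.mp hB).1).1 D hDT)
    (fun S _ hS => branch_low n k t ht hk F hF hint l hl hc S hS)
  rwa [hDl] at this

lemma bound_two (n k t : ℕ) (ht : 1 ≤ t) (hk : t + 2 ≤ k) (F : Finset (Finset ℕ))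
    (hF : F ⊆ (Finset.Icc 1 n).powersetCard k)
    (hint : ∀ P ∈ transv n k t F, ∀ Q ∈ transv n k t F, t ≤ (P ∩ Q).card)
    (hc : ¬ common n k t F (t + 2)) :
    (minT n k t F (t + 2)).card ≤ (4 * t + 3) * (k - t + 1) + t.choose 2 := by
  set W := minT n k t F (t + 2) with hW
  set K := k - t + 1 with hK
  have hWT : ∀ B ∈ W, B ∈ transv n k t F := fun B hB =>
    (Finset.mem_filter.mp (Finset.mem_filter.mp hB).1).1
  have hWc : ∀ B ∈ W, B.card = t + 2 := fun B hB => (Finset.mem_filter.mp hB).2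
  have one : ∀ S : Finset ℕ, S.card = t + 1 → (W.filter fun B => S ⊆ B).card ≤ K := by
    intro S hS
    have := branch_main n k t ht (by omega) F hF (t + 2) 1 S (by omega)
    simpa using this
  by_cases hall : ∀ P ∈ minFam (transv n k t F), ∀ Q ∈ minFam (transv n k t F),
      P.card ≤ t + 2 → Q.card ≤ t + 2 → t + 1 ≤ (P ∩ Q).card
  · rcases Finset.eq_empty_or_nonempty W with he | ⟨D, hD⟩
    · rw [he]; simp
    have := choose_step W D (t + 1) K
      (fun B hB => hall B (Finset.mem_filter.mp hB).1 D (Finset.mem_filter.mp hD).1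
        (hWc B hB).le (hWc D hD).le)
      (fun S _ hS => one S hS)
    rw [hWc D hD, Nat.choose_succ_self_right] at this
    nlinarith [Nat.zero_le K]
  · push Not at hall
    obtain ⟨P0, hP0, Q0, hQ0, hPc, hQc, hPQ⟩ := hall
    have hP0T : P0 ∈ transv n k t F := (Finset.mem_filter.mp hP0).1
    have hQ0T : Q0 ∈ transv n k t F := (Finset.mem_filter.mp hQ0).1
    set C := P0 ∩ Q0 with hC
    have hCt : C.card = t := by
      have := hint P0 hP0T Q0 hQ0T
      rw [← hC] at this; omega
    set P := P0 \ C with hP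
    set Q := Q0 \ C with hQ
    have hPcard : P.card ≤ 2 := by
      rw [hP, Finset.card_sdiff_of_subset Finset.inter_subset_left, ← hC]; omega
    have hQcard : Q.card ≤ 2 := by
      rw [hQ, Finset.card_sdiff_of_subset Finset.inter_subset_right, ← hC]; omega
    have hPQd : Disjoint P Q := by
      rw [Finset.disjoint_left]; intro x hx hx'
      simp only [hP, hQ, hC, Finset.mem_sdiff, Finset.mem_inter] at hx hx'; tauto
    have hCP : Disjoint C P := Finset.disjoint_sdiff
    have hCQ : Disjoint C Q := Finset.disjoint_sdiff
    have sP : ∀ B ∈ W, t ≤ (B ∩ C).card + (B ∩ P).card := by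
      intro B hB
      refine (hint B (hWT B hB) P0 hP0T).trans ?_
      refine le_trans (Finset.card_le_card ?_) (Finset.card_union_le _ _)
      intro x hx
      simp only [hP, Finset.mem_inter, Finset.mem_union, Finset.mem_sdiff] at hx ⊢; tauto
    have sQ : ∀ B ∈ W, t ≤ (B ∩ C).card + (B ∩ Q).card := by
      intro B hB
      refine (hint B (hWT B hB) Q0 hQ0T).trans ?_
      refine le_trans (Finset.card_le_card ?_) (Finset.card_union_le _ _)
      intro x hx
      simp only [hQ, Finset.mem_inter, Finset.mem_union, Finset.mem_sdiff] at hx ⊢; tauto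
    have hcov : W ⊆ (W.filter fun B => C ⊆ B)
        ∪ ((C ×ˢ (P ×ˢ Q)).biUnion fun p =>
            W.filter fun B => insert p.2.1 (insert p.2.2 (C.erase p.1)) ⊆ B)
        ∪ ((C.powersetCard (t - 2)).image fun S => S ∪ (P ∪ Q)).filter (fun _ => 2 ≤ t) := by
      intro B hB
      have h1 := sP B hB
      have h2 := sQ B hB
      have h3 : (B ∩ P).card ≤ P.card := Finset.card_le_card Finset.inter_subset_right
      have h4 : (B ∩ Q).card ≤ Q.card := Finset.card_le_card Finset.inter_subset_right
      have h5 : (B ∩ C).card ≤ C.card := Finset.card_le_card Finset.inter_subset_right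
      simp only [Finset.mem_union]
      rcases Nat.lt_or_ge (B ∩ C).card t with hlt | hge
      · rcases Nat.lt_or_ge ((B ∩ C).card + 1) t with hlt2 | hge2
        · right
          have eP : B ∩ P = P := Finset.eq_of_subset_of_card_le Finset.inter_subset_right (by omega)
          have eQ : B ∩ Q = Q := Finset.eq_of_subset_of_card_le Finset.inter_subset_right (by omega)
          have cPQ : (P ∪ Q).card = 4 := by
            rw [Finset.card_union_of_disjoint hPQd]; rw [eP] at h1 h3; rw [eQ] at h2; omega
          have hd : Disjoint (B ∩ C) (P ∪ Q) :=
            (Finset.disjoint_union_right.mpr ⟨hCP, hCQ⟩).mono_left Finset.inter_subset_right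
          have hsub : (B ∩ C) ∪ (P ∪ Q) ⊆ B := by
            refine Finset.union_subset Finset.inter_subset_left (Finset.union_subset ?_ ?_)
            · exact Finset.inter_eq_right.mp eP
            · exact Finset.inter_eq_right.mp eQ
          have hcc := Finset.card_union_of_disjoint hd
          have hle := Finset.card_le_card hsub
          rw [hWc B hB] at hle
          simp only [Finset.mem_filter, Finset.mem_image, Finset.mem_powersetCard]
          rw [eP] at h1
          refine ⟨⟨B ∩ C, ⟨Finset.inter_subset_right, by omega⟩, ?_⟩, by omega⟩
          apply Finset.eq_of_subset_of_card_le hsub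
          rw [hWc B hB]; omega
        · left; right
          have : ∃ c ∈ C, c ∉ B := by
            by_contra hcon
            push Not at hcon
            have : B ∩ C = C := Finset.inter_eq_right.mpr hcon
            rw [this] at hlt; omega
          obtain ⟨c, hcC, hcB⟩ := this
          obtain ⟨p, hp⟩ := Finset.card_pos.mp (show 0 < (B ∩ P).card by omega)
          obtain ⟨q, hq⟩ := Finset.card_pos.mp (show 0 < (B ∩ Q).card by omega)
          rw [Finset.mem_inter] at hp hq
          simp only [Finset.mem_biUnion, Finset.mem_product, Finset.mem_filter]
          refine ⟨(c, p, q), ⟨hcC, hp.2, hq.2⟩, hB, ?_⟩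
          have hse : B ∩ C = C.erase c := by
            apply Finset.eq_of_subset_of_card_le
            · intro x hx
              rw [Finset.mem_inter] at hx
              rw [Finset.mem_erase]
              refine ⟨?_, hx.2⟩
              rintro rfl; exact hcB hx.1
            · rw [Finset.card_erase_of_mem hcC]; omega
          refine Finset.insert_subset hp.1 (Finset.insert_subset hq.1 ?_)
          rw [← hse]; exact Finset.inter_subset_left
      · left; left
        rw [Finset.mem_filter]
        refine ⟨hB, Finset.inter_eq_right.mp
          (Finset.eq_of_subset_of_card_le Finset.inter_subset_right (by omega))⟩
    have b1 : (W.filter fun B => C ⊆ B).card ≤ 3 * K := by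
      have := branch_low n k t ht (by omega) F hF hint (t + 2) (by omega) hc C hCt
      have e1 : t + 2 - t + 1 = 3 := by omega
      have e2 : t + 2 - t - 1 = 1 := by omega
      rw [e1, e2, pow_one] at this
      exact this
    have b2 : ((C ×ˢ (P ×ˢ Q)).biUnion fun p =>
            W.filter fun B => insert p.2.1 (insert p.2.2 (C.erase p.1)) ⊆ B).card ≤ (4 * t) * K := by
      refine (Finset.card_biUnion_le_card_mul _ _ K ?_).trans ?_
      · rintro ⟨c, p, q⟩ h
        simp only [Finset.mem_product] at h
        obtain ⟨hcC, hpP, hqQ⟩ := h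
        apply one
        have n1 : q ∉ C.erase c := fun hh =>
          Finset.disjoint_left.mp hCQ (Finset.mem_of_mem_erase hh) hqQ
        have n2 : p ∉ insert q (C.erase c) := by
          rw [Finset.mem_insert]
          rintro (rfl | hh)
          · exact Finset.disjoint_left.mp hPQd hpP hqQ
          · exact Finset.disjoint_left.mp hCP (Finset.mem_of_mem_erase hh) hpP
        rw [Finset.card_insert_of_notMem n2, Finset.card_insert_of_notMem n1,
          Finset.card_erase_of_mem hcC]
        omega
      · apply Nat.mul_le_mul_right
        rw [Finset.card_product, Finset.card_product, hCt]
        have := Nat.mul_le_mul hPcard hQcard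
        nlinarith
    have b3 : (((C.powersetCard (t - 2)).image fun S => S ∪ (P ∪ Q)).filter
        (fun _ => 2 ≤ t)).card ≤ t.choose 2 := by
      by_cases h2 : 2 ≤ t
      · refine (Finset.card_filter_le _ _).trans (Finset.card_image_le.trans ?_)
        rw [Finset.card_powersetCard, hCt, Nat.choose_symm h2]
      · simp [h2]
    have := Finset.card_le_card hcov
    have u1 := Finset.card_union_le ((W.filter fun B => C ⊆ B)
        ∪ ((C ×ˢ (P ×ˢ Q)).biUnion fun p =>
            W.filter fun B => insert p.2.1 (insert p.2.2 (C.erase p.1)) ⊆ B))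
        (((C.powersetCard (t - 2)).image fun S => S ∪ (P ∪ Q)).filter (fun _ => 2 ≤ t))
    have u2 := Finset.card_union_le (W.filter fun B => C ⊆ B)
        ((C ×ˢ (P ×ˢ Q)).biUnion fun p =>
            W.filter fun B => insert p.2.1 (insert p.2.2 (C.erase p.1)) ⊆ B)
    have : (4 * t + 3) * K = 3 * K + 4 * t * K := by ring
    omega

lemma triple (n k t : ℕ) (ht : 1 ≤ t) (F : Finset (Finset ℕ))
    (hint : ∀ P ∈ transv n k t F, ∀ Q ∈ transv n k t F, t ≤ (P ∩ Q).card)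
    (hc : ¬ common n k t F (t + 1)) :
    ∃ Y ⊆ Finset.Icc 1 n, Y.card = t + 2 ∧ ∀ A ∈ F, t + 1 ≤ (A ∩ Y).card := by
  set M := minFam (transv n k t F) with hM
  have hMT : ∀ B ∈ M, B ∈ transv n k t F := fun B hB => (Finset.mem_filter.mp hB).1
  have hget : ∀ C : Finset ℕ, C.card = t → ∃ B ∈ M, B.card ≤ t + 1 ∧ ¬ C ⊆ B := by
    intro C hC
    by_contra h
    push Not at h
    exact hc ⟨C, hC, h⟩
  have hsize : ∀ B ∈ M, t ≤ B.card := by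
    intro B hB
    have := hint B (hMT B hB) B (hMT B hB)
    rwa [Finset.inter_self] at this
  have hsize' : ∀ B ∈ M, t + 1 ≤ B.card := by
    intro B hB
    by_contra hlt
    have hBt : B.card = t := by have := hsize B hB; omega
    obtain ⟨D, hD, _, hBD⟩ := hget B hBt
    apply hBD
    apply Finset.inter_eq_left.mp
    exact Finset.eq_of_subset_of_card_le Finset.inter_subset_left
      (by rw [hBt]; exact hint B (hMT B hB) D (hMT D hD))
  obtain ⟨D1, hD1, hD1c, _⟩ := hget (Finset.range t) (by simp)
  have c1 : D1.card = t + 1 := by have := hsize' D1 hD1; omega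
  obtain ⟨C0, hC0, hC0c⟩ := Finset.exists_subset_card_eq (s := D1) (n := t) (by omega)
  obtain ⟨D2, hD2, hD2c, hCD2⟩ := hget C0 hC0c
  have c2 : D2.card = t + 1 := by have := hsize' D2 hD2; omega
  have hne : D1 ≠ D2 := by rintro rfl; exact hCD2 hC0
  have hCt : (D1 ∩ D2).card = t := by
    have h1 := hint D1 (hMT _ hD1) D2 (hMT _ hD2)
    have h2 := inter_card_lt (t + 1) D1 D2 c1 c2 hne
    omega
  obtain ⟨D3, hD3, hD3c, hCD3⟩ := hget _ hCt
  have c3 : D3.card = t + 1 := by have := hsize' D3 hD3; omega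
  have h31 := hint D3 (hMT _ hD3) D1 (hMT _ hD1)
  have h32 := hint D3 (hMT _ hD3) D2 (hMT _ hD2)
  have h3C : (D3 ∩ (D1 ∩ D2)).card < t := by
    by_contra h
    apply hCD3
    apply Finset.inter_eq_right.mp
    exact Finset.eq_of_subset_of_card_le Finset.inter_subset_right (by omega)
  have hD3Y : D3 ⊆ D1 ∪ D2 := by
    have e := Finset.card_union_add_card_inter (D3 ∩ D1) (D3 ∩ D2)
    rw [← Finset.inter_union_distrib_left, ← Finset.inter_inter_distrib_left] at e
    apply Finset.inter_eq_left.mp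
    exact Finset.eq_of_subset_of_card_le Finset.inter_subset_left (by omega)
  refine ⟨D1 ∪ D2, ?_, ?_, ?_⟩
  · have := (Finset.mem_filter.mp (hMT _ hD1)).1
    have := (Finset.mem_filter.mp (hMT _ hD2)).1
    rw [Finset.mem_powerset] at *
    exact Finset.union_subset (by assumption) (by assumption)
  · have := Finset.card_union_add_card_inter D1 D2
    omega
  · intro A hA
    by_contra hlt
    have g : ∀ D ∈ M, D ⊆ D1 ∪ D2 → A ∩ (D1 ∪ D2) ⊆ D := by
      intro D hD hDY
      have h1 : t ≤ (D ∩ A).card := (Finset.mem_filter.mp (hMT _ hD)).2.2 A hA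
      have h2 : D ∩ A = A ∩ (D1 ∪ D2) := by
        apply Finset.eq_of_subset_of_card_le
        · rw [Finset.inter_comm]; exact Finset.inter_subset_inter_left hDY
        · omega
      rw [← h2]; exact Finset.inter_subset_left
    have g1 := g D1 hD1 Finset.subset_union_left
    have g2 := g D2 hD2 Finset.subset_union_right
    have g3 := g D3 hD3 hD3Y
    have g4 : A ∩ (D1 ∪ D2) ⊆ D3 ∩ (D1 ∩ D2) :=
      Finset.subset_inter g3 (Finset.subset_inter g1 g2)
    have g5 := Finset.card_le_card g4
    have h1 : t ≤ (D1 ∩ A).card := (Finset.mem_filter.mp (hMT _ hD1)).2.2 A hA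
    have h2 : (D1 ∩ A).card ≤ (A ∩ (D1 ∪ D2)).card := by
      rw [Finset.inter_comm]
      exact Finset.card_le_card (Finset.inter_subset_inter_left Finset.subset_union_left)
    omega

lemma inter_sub_patt (n k t : ℕ) (hk : t + 2 ≤ k) (F : Finset (Finset ℕ))
    (hF : F ⊆ (Finset.Icc 1 n).powersetCard k) (Y : Finset ℕ) (hY : Y.card = t + 2)
    (hA : ∀ A ∈ F, t + 1 ≤ (A ∩ Y).card) : interFam F ⊆ patt n k t Y := by
  intro X hX
  simp only [interFam, Finset.mem_image, Finset.mem_filter, Finset.mem_product, Prod.exists] at hX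
  obtain ⟨A, B, ⟨⟨hAF, hBF⟩, hne⟩, rfl⟩ := hX
  have hA1 := Finset.mem_powersetCard.mp (hF hAF)
  have hB1 := Finset.mem_powersetCard.mp (hF hBF)
  have h1 := hA A hAF
  have h2 := hA B hBF
  simp only [patt, Finset.mem_filter, Finset.mem_powerset]
  refine ⟨Finset.inter_subset_left.trans hA1.1, ?_, ?_, ?_⟩
  · have e := Finset.card_union_add_card_inter (A ∩ Y) (B ∩ Y)
    have e2 : (A ∩ Y) ∩ (B ∩ Y) = A ∩ B ∩ Y := by
      ext x; simp only [Finset.mem_inter]; tauto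
    have e3 : ((A ∩ Y) ∪ (B ∩ Y)).card ≤ Y.card :=
      Finset.card_le_card (Finset.union_subset Finset.inter_subset_right Finset.inter_subset_right)
    rw [e2] at e
    omega
  · have e := card_split A Y
    have : ((A ∩ B) \ Y).card ≤ (A \ Y).card :=
      Finset.card_le_card (Finset.sdiff_subset_sdiff Finset.inter_subset_left le_rfl)
    omega
  · rw [card_split]
    exact inter_card_lt k A B hA1.2 hB1.2 hne

lemma cover (n k t a : ℕ) (ht : 1 ≤ t) (hk : t + 2 ≤ k) (F : Finset (Finset ℕ))
    (hF : F ⊆ (Finset.Icc 1 n).powersetCard k) (hT : tIntersecting t F)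
    (ha : t + 1 ≤ a) (hcom : common n k t F a) :
    (interFam F).card ≤ ∑ j ∈ Finset.range (k - t), (n - t).choose j
      + ∑ l ∈ (Finset.Icc (t + 2) k).filter (fun l => a < l), (minT n k t F l).card *
        ((∑ i ∈ Finset.Icc t l, l.choose i) * ∑ j ∈ Finset.range (k - l + 1), n.choose j) := by
  obtain ⟨C, hCt, hC⟩ := hcom
  set U := Finset.Icc 1 n with hU
  have hUc : U.card = n := by simp [hU]
  let X0 := U.powerset.filter fun X => C ⊆ X ∧ X.card + 1 ≤ k
  let XB : ℕ → Finset ℕ → Finset (Finset ℕ) := fun l B =>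
    U.powerset.filter fun X => (X ∩ B).card ∈ Finset.Icc t l ∧ (X \ B).card ∈ Finset.range (k - l + 1)
  have hsub : interFam F ⊆ X0 ∪ ((Finset.Icc (t + 2) k).filter (fun l => a < l)).biUnion
      fun l => (minT n k t F l).biUnion fun B => XB l B := by
    intro X hX
    simp only [interFam, Finset.mem_image, Finset.mem_filter, Finset.mem_product, Prod.exists] at hX
    obtain ⟨A, D, ⟨⟨hAF, hDF⟩, hne⟩, rfl⟩ := hX
    have hself : ∀ A ∈ F, A ∈ transv n k t F := by
      intro A hA
      have := Finset.mem_powersetCard.mp (hF hA)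
      simp only [transv, Finset.mem_filter, Finset.mem_powerset]
      exact ⟨this.1, this.2.le, fun B hB => hT A hA B hB⟩
    have big : ∀ A ∈ F, ∀ D ∈ F, ∀ B ∈ minFam (transv n k t F), B ⊆ A → a < B.card →
        A ∩ D ∈ ((Finset.Icc (t + 2) k).filter (fun l => a < l)).biUnion
          fun l => (minT n k t F l).biUnion fun B => XB l B := by
      intro A hA D hD B hB hBA hlt
      have hA1 := Finset.mem_powersetCard.mp (hF hA)
      have hBT := Finset.mem_filter.mp (Finset.mem_filter.mp hB).1
      have hBk : B.card ≤ k := hBT.2.1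
      simp only [Finset.mem_biUnion, Finset.mem_filter, Finset.mem_Icc]
      refine ⟨B.card, ⟨⟨by omega, hBk⟩, hlt⟩, B, ?_, ?_⟩
      · exact Finset.mem_filter.mpr ⟨hB, rfl⟩
      · simp only [XB, Finset.mem_filter, Finset.mem_powerset, Finset.mem_Icc, Finset.mem_range]
        have e1 : A ∩ D ∩ B = B ∩ D := by
          ext x; have := @hBA x; simp only [Finset.mem_inter]; tauto
        refine ⟨Finset.inter_subset_left.trans hA1.1, ⟨?_, ?_⟩, ?_⟩
        · rw [e1]; exact hBT.2.2 D hD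
        · exact Finset.card_le_card Finset.inter_subset_right
        · have : ((A ∩ D) \ B).card ≤ (A \ B).card :=
            Finset.card_le_card (Finset.sdiff_subset_sdiff Finset.inter_subset_left le_rfl)
          rw [Finset.card_sdiff_of_subset hBA] at this
          omega
    obtain ⟨B1, hB1, hB1A⟩ := exists_minFam _ A (hself A hAF)
    obtain ⟨B2, hB2, hB2D⟩ := exists_minFam _ D (hself D hDF)
    rw [Finset.mem_union]
    rcases Nat.lt_or_ge a B1.card with h1 | h1
    · right; exact big A hAF D hDF B1 hB1 hB1A h1
    rcases Nat.lt_or_ge a B2.card with h2 | h2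
    · right; rw [Finset.inter_comm]; exact big D hDF A hAF B2 hB2 hB2D h2
    left
    have hA1 := Finset.mem_powersetCard.mp (hF hAF)
    have hD1 := Finset.mem_powersetCard.mp (hF hDF)
    simp only [X0, Finset.mem_filter, Finset.mem_powerset]
    exact ⟨Finset.inter_subset_left.trans hA1.1,
      Finset.subset_inter ((hC B1 hB1 h1).trans hB1A) ((hC B2 hB2 h2).trans hB2D),
      inter_card_lt k A D hA1.2 hD1.2 hne⟩
  have hX0 : X0.card ≤ ∑ j ∈ Finset.range (k - t), (n - t).choose j := by
    by_cases hCU : C ⊆ U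
    · have h := count_prod U C hCU {t} (Finset.range (k - t))
      rw [Finset.sum_singleton, hCt, Nat.choose_self, one_mul, hUc] at h
      rw [← h]
      apply Finset.card_le_card
      intro X hX
      simp only [X0, Finset.mem_filter, Finset.mem_singleton, Finset.mem_range] at hX ⊢
      have e := card_split X C
      have e2 : X ∩ C = C := Finset.inter_eq_right.mpr hX.2.1
      refine ⟨hX.1, ?_, ?_⟩
      · rw [e2, hCt]
      · rw [e2, hCt] at e; omega
    · have : X0 = ∅ := by
        rw [Finset.eq_empty_iff_forall_notMem]
        intro X hX
        simp only [X0, Finset.mem_filter, Finset.mem_powerset] at hX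
        exact hCU (hX.2.1.trans hX.1)
      rw [this]; simp
  have hXB : ∀ l, ∀ B ∈ minT n k t F l, (XB l B).card ≤
      (∑ i ∈ Finset.Icc t l, l.choose i) * ∑ j ∈ Finset.range (k - l + 1), n.choose j := by
    intro l B hB
    have hBl : B.card = l := (Finset.mem_filter.mp hB).2
    have hBU : B ⊆ U := Finset.mem_powerset.mp
      (Finset.mem_filter.mp (Finset.mem_filter.mp (Finset.mem_filter.mp hB).1).1).1
    have h := count_prod U B hBU (Finset.Icc t l) (Finset.range (k - l + 1))
    rw [hBl] at h
    refine (le_of_eq h).trans (Nat.mul_le_mul_left _ (Finset.sum_le_sum fun j _ => ?_))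
    exact Nat.choose_le_choose _ (by omega)
  refine (Finset.card_le_card hsub).trans ((Finset.card_union_le _ _).trans ?_)
  refine Nat.add_le_add hX0 (Finset.card_biUnion_le.trans (Finset.sum_le_sum fun l _ => ?_))
  exact Finset.card_biUnion_le_card_mul _ _ _ (hXB l)

/-- upper half binomial sum -/
def cc (t s : ℕ) : ℕ := ∑ j ∈ Finset.range (s + 1), (t + s).choose (t + j)

lemma cc_eq (t s : ℕ) : ∑ i ∈ Finset.Icc t (t + s), (t + s).choose i = cc t s := by
  unfold cc
  rw [← Finset.Ico_add_one_right_eq_Icc, Finset.sum_Ico_eq_sum_range]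
  congr 2; omega

lemma cc_step (t s : ℕ) (ht : 1 ≤ t) (hs : 2 ≤ s) : 3 * cc t (s + 1) ≤ (6 + t) * cc t s := by
  obtain ⟨u, rfl⟩ : ∃ u, t = u + 1 := ⟨t - 1, by omega⟩
  have e : cc (u + 1) (s + 1) = 2 * cc (u + 1) s + (u + 1 + s).choose u := by
    unfold cc
    have h1 : ∀ j, (u + 1 + (s + 1)).choose (u + 1 + j)
        = (u + 1 + s).choose (u + j) + (u + 1 + s).choose (u + 1 + j) := by
      intro j
      have : u + 1 + j = u + j + 1 := by ring
      rw [this, show u + 1 + (s + 1) = u + 1 + s + 1 by ring, Nat.choose_succ_succ']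
    simp only [h1, Finset.sum_add_distrib]
    rw [Finset.sum_range_succ' (fun j => (u + 1 + s).choose (u + j)),
      Finset.sum_range_succ (fun j => (u + 1 + s).choose (u + 1 + j)) (s + 1)]
    rw [Nat.choose_eq_zero_of_lt (show u + 1 + s < u + 1 + (s + 1) by omega)]
    have : ∑ j ∈ Finset.range (s + 1), (u + 1 + s).choose (u + (j + 1))
        = ∑ j ∈ Finset.range (s + 1), (u + 1 + s).choose (u + 1 + j) :=
      Finset.sum_congr rfl fun j _ => by rw [show u + (j + 1) = u + 1 + j by ring]
    rw [this]
    ring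
  have h2 : (u + 1 + s).choose u * 3 ≤ cc (u + 1) s * (u + 1) := by
    have h3 : (u + 1 + s).choose (u + 1) ≤ cc (u + 1) s := by
      unfold cc
      have := Finset.single_le_sum (f := fun j => (u + 1 + s).choose (u + 1 + j))
        (fun _ _ => Nat.zero_le _) (Finset.mem_range.mpr (Nat.succ_pos s))
      simpa using this
    have h4 := Nat.choose_succ_right_eq (u + 1 + s) u
    have h5 : u + 1 + s - u = s + 1 := by omega
    rw [h5] at h4
    calc _ ≤ (u + 1 + s).choose u * (s + 1) := Nat.mul_le_mul_left _ (by omega)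
      _ = _ := h4.symm
      _ ≤ _ := Nat.mul_le_mul_right _ h3
  rw [e]; nlinarith

lemma two_choose (t : ℕ) : 2 * (t + 2).choose 2 = (t + 2) * (t + 1) := by
  have h := Nat.choose_succ_right_eq (t + 2) 1
  rw [Nat.choose_one_right] at h
  have e : t + 2 - 1 = t + 1 := by omega
  rw [e] at h
  linarith

lemma cc_two (t : ℕ) : 2 * cc t 2 = t ^ 2 + 5 * t + 8 := by
  unfold cc
  have a1 : (t + 2).choose t = (t + 2).choose 2 := by
    exact Nat.choose_symm_add
  have a2 : (t + 2).choose (t + 1) = t + 2 := by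
    have := Nat.choose_succ_self_right (t + 1); simpa using this
  simp only [Finset.sum_range_succ, Finset.sum_range_zero, add_zero, a1, a2, Nat.choose_self]
  have := two_choose t
  nlinarith

/-- partial binomial sum -/
def SS (n j : ℕ) : ℕ := ∑ i ∈ Finset.range (j + 1), n.choose i

/-- bound on number of minimal transversals -/
def NN (t K s : ℕ) : ℕ := (t + s).choose t * ((s + 1) * K ^ (s - 1))

lemma NN_step (t K s : ℕ) (hs : 2 ≤ s) : 9 * NN t K (s + 1) ≤ 4 * (t + 3) * K * NN t K s := by
  unfold NN
  obtain ⟨i, rfl⟩ : ∃ i, s = i + 2 := ⟨s - 2, by omega⟩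
  have h := Nat.choose_mul_succ_eq (t + (i + 2)) t
  have e : t + (i + 2) + 1 - t = i + 3 := by omega
  rw [e] at h
  have e2 : t + (i + 2 + 1) = t + (i + 2) + 1 := by ring
  have e3 : i + 2 + 1 - 1 = (i + 2 - 1) + 1 := by omega
  rw [e2, e3, pow_succ]
  generalize (t + (i + 2) + 1).choose t = C1 at *
  generalize (t + (i + 2)).choose t = C0 at *
  generalize K ^ (i + 2 - 1) = Z at *
  have key : 9 * (C1 * (i + 4)) ≤ 4 * (t + 3) * (C0 * (i + 3)) := by
    apply Nat.le_of_mul_le_mul_right _ (show 0 < i + 3 by omega)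
    have : 9 * (C1 * (i + 4)) * (i + 3) = 9 * (i + 4) * (C0 * (t + (i + 2) + 1)) := by
      rw [h]; ring
    rw [this]
    have h6 : 9 * (i + 4) * (t + (i + 2) + 1) ≤ 4 * (t + 3) * (i + 3) * (i + 3) := by
      have : 9 * (i + 4) * (t + (i + 2) + 1) + ((4 * i ^ 2 + 15 * i) * t + 3 * i * (i + 3))
        = 4 * (t + 3) * (i + 3) * (i + 3) := by ring
      omega
    calc _ = C0 * (9 * (i + 4) * (t + (i + 2) + 1)) := by ring
      _ ≤ C0 * (4 * (t + 3) * (i + 3) * (i + 3)) := Nat.mul_le_mul_left _ h6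
      _ = _ := by ring
  calc _ = 9 * (C1 * (i + 4)) * (Z * K) := by ring
    _ ≤ 4 * (t + 3) * (C0 * (i + 3)) * (Z * K) := Nat.mul_le_mul_right _ key
    _ = _ := by ring

lemma binom_ratio (n q X h : ℕ) (hq : 1 ≤ q) (hqn : q ≤ n)
    (hX : X * n.choose (q - 1) ≤ h * n.choose q) :
    ∀ j < q, X * n.choose j ≤ h * n.choose (j + 1) := by
  intro j hj
  have h1 := Nat.choose_succ_right_eq n (q - 1)
  rw [show q - 1 + 1 = q by omega] at h1
  have hpos : 0 < n.choose (q - 1) := Nat.choose_pos (by omega)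
  have h2 : X * q ≤ h * (n - (q - 1)) := by
    apply Nat.le_of_mul_le_mul_left _ hpos
    calc _ = (X * n.choose (q - 1)) * q := by ring
      _ ≤ (h * n.choose q) * q := Nat.mul_le_mul_right _ hX
      _ = h * (n.choose q * q) := by ring
      _ = _ := by rw [h1]; ring
  have h3 := Nat.choose_succ_right_eq n j
  apply Nat.le_of_mul_le_mul_right _ (show 0 < j + 1 by omega)
  calc X * n.choose j * (j + 1) = n.choose j * (X * (j + 1)) := by ring
    _ ≤ n.choose j * (X * q) := by gcongr; omega
    _ ≤ n.choose j * (h * (n - (q - 1))) := by gcongr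
    _ ≤ n.choose j * (h * (n - j)) := by gcongr; omega
    _ = h * (n.choose j * (n - j)) := by ring
    _ = _ := by rw [← h3]; ring

lemma SS_ratio (n q X h : ℕ) (hH : ∀ j < q, X * n.choose j ≤ h * n.choose (j + 1)) :
    ∀ j < q, X * SS n j ≤ h * SS n (j + 1) := by
  intro j hj
  unfold SS
  rw [Finset.sum_range_succ' _ (j + 1), Finset.mul_sum, mul_add, Finset.mul_sum]
  refine le_trans (Finset.sum_le_sum ?_) (Nat.le_add_right _ _)
  intro i hi
  rw [Finset.mem_range] at hi
  exact hH i (by omega)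

lemma rhs_bound (n t q : ℕ) (ht : 1 ≤ t) (hq : 1 ≤ q) :
    2 * ((n - t - 1).choose q
          + ((t + 2) * (t + 1) - 4) / 2 * (n - t - 2).choose q
          + ((t + 3) * (t + 2) - 8) / 2 * ∑ j ∈ Finset.range q, (n - t - 2).choose j
          + ∑ j ∈ Finset.range (q - 1), (n - t - 2).choose j)
      ≤ (t ^ 2 + 3 * t) * n.choose q + (t ^ 2 + 5 * t + 8) * SS n (q - 1) := by
  have e1 : 2 * (((t + 2) * (t + 1) - 4) / 2) + 2 = t ^ 2 + 3 * t := by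
    have := two_choose t
    have : t ^ 2 + 3 * t + 2 = (t + 2) * (t + 1) := by ring
    have : 1 ≤ t ^ 2 := Nat.one_le_pow _ _ ht
    omega
  have e2 : 2 * (((t + 3) * (t + 2) - 8) / 2) + 2 = t ^ 2 + 5 * t := by
    have := two_choose (t + 1)
    have : t ^ 2 + 5 * t + 6 = (t + 1 + 2) * (t + 1 + 1) := by ring
    have : t ^ 2 + 5 * t + 6 = (t + 3) * (t + 2) := by ring
    have : 1 ≤ t ^ 2 := Nat.one_le_pow _ _ ht
    omega
  generalize ((t + 2) * (t + 1) - 4) / 2 = u at *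
  generalize ((t + 3) * (t + 2) - 8) / 2 = v at *
  have m1 : (n - t - 1).choose q ≤ n.choose q := Nat.choose_le_choose _ (by omega)
  have m2 : (n - t - 2).choose q ≤ n.choose q := Nat.choose_le_choose _ (by omega)
  have m3 : ∑ j ∈ Finset.range q, (n - t - 2).choose j ≤ SS n (q - 1) := by
    unfold SS
    rw [show q - 1 + 1 = q by omega]
    exact Finset.sum_le_sum fun j _ => Nat.choose_le_choose _ (by omega)
  have m4 : ∑ j ∈ Finset.range (q - 1), (n - t - 2).choose j ≤ SS n (q - 1) := by
    refine le_trans (Finset.sum_le_sum_of_subset (Finset.range_mono (by omega))) m3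
  rw [← e1, ← e2]
  have m2' := Nat.mul_le_mul_left u m2
  have m3' := Nat.mul_le_mul_left v m3
  have : (2 * v + 2 + 8) * SS n (q - 1) = 2 * (v * SS n (q - 1)) + 10 * SS n (q - 1) := by ring
  have : (2 * u + 2) * n.choose q = 2 * (u * n.choose q) + 2 * n.choose q := by ring
  omega

lemma geom_sum (a : ℕ → ℕ) (q : ℕ) (h : ∀ i, i + 1 < q → 5 * a (i + 1) ≤ a i) :
    ∀ r, r + 1 ≤ q → 4 * ∑ i ∈ Finset.range r, a (i + 1) + a r ≤ a 0 := by
  intro r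
  induction r with
  | zero => intro _; simp
  | succ r ih =>
    intro hr
    rw [Finset.sum_range_succ]
    have := ih (by omega)
    have := h r (by omega)
    omega

lemma poly1 (t K E : ℕ) (hK : 3 ≤ K) (hE : E + 1 = (t + 2) ^ 2 * K) :
    20 * (t + 3) * (t + 6) * (t ^ 2 + 3 * t) * K ≤ 27 * (t ^ 2 + 5 * t + 8) * E := by
  have h1 : (3 * (t + 2) ^ 2) * K ≤ 3 * E + K := by nlinarith
  zify at *
  have h2 : ((3 * ((t:ℤ) + 2) ^ 2) - 1) * K ≤ 3 * E := by linarith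
  have h3 : (20 * ((t:ℤ) + 3) * (t + 6) * (t ^ 2 + 3 * t)) ≤
      9 * (t ^ 2 + 5 * t + 8) * ((3 * ((t:ℤ) + 2) ^ 2) - 1) := by
    have ht : (0:ℤ) ≤ t := by positivity
    have : 9 * (t ^ 2 + 5 * t + 8) * ((3 * ((t:ℤ) + 2) ^ 2) - 1)
      - (20 * ((t:ℤ) + 3) * (t + 6) * (t ^ 2 + 3 * t)) =
      7 * t ^ 4 + 3 * t ^ 3 + 279 * t + 792 - 45 * t ^ 2 := by ring
    have h7 : (0:ℤ) ≤ 7 * t ^ 4 + 3 * t ^ 3 + 279 * t + 792 - 45 * t ^ 2 := by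
      nlinarith [sq_nonneg ((t:ℤ)^2 - 4), pow_nonneg ht 3]
    linarith
  have hK0 : (0:ℤ) ≤ K := by positivity
  have h4 := mul_le_mul_of_nonneg_right h3 hK0
  have h5 : (0:ℤ) ≤ 9 * ((t:ℤ) ^ 2 + 5 * t + 8) := by positivity
  have h6 := mul_le_mul_of_nonneg_left h2 h5
  linarith

lemma poly2 (t K : ℕ) (ht : 2 ≤ t) (hK : 3 ≤ K) :
    4 * ((4 * t + 3) * K + t.choose 2) + 3 * (t + 2).choose 2 * K ≤ 4 * ((t + 2) ^ 2 * K) := by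
  have h1 := two_choose t
  obtain ⟨u, rfl⟩ : ∃ u, t = u + 2 := ⟨t - 2, by omega⟩
  have h2 := two_choose u
  have h3 : 2 * (3 * (u + 2 + 2).choose 2 * K) = 3 * ((u + 2 + 2) * (u + 2 + 1)) * K := by
    rw [← h1]; ring
  obtain ⟨L, rfl⟩ : ∃ L, K = L + 3 := ⟨K - 3, by omega⟩
  nlinarith [Nat.zero_le (L * u), Nat.zero_le (L * u ^ 2), Nat.zero_le (u ^ 2)]

lemma arith (n t q : ℕ) (ht : 1 ≤ t) (hq : 1 ≤ q) (hqn : q ≤ n) (N : ℕ → ℕ)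
    (hN : ∀ i < q, N i ≤ NN t (q + 2) (i + 2))
    (hN0 : N 0 ≤ (4 * t + 3) * (q + 2) + t.choose 2)
    (hineq : 2 * ∑ i ∈ Finset.range q, (t + 2 + i) ^ 2 * (q + 2) ^ (i + 1) * cc t (i + 2) * SS n (q - 1 - i)
      ≤ (t ^ 2 + 3 * t) * n.choose q + (t ^ 2 + 5 * t + 8) * SS n (q - 1)) :
    ∑ i ∈ Finset.range q, N i * (cc t (i + 2) * SS n (q - 1 - i)) ≤
      ∑ i ∈ Finset.range q, (t + 2 + i) ^ 2 * (q + 2) ^ (i + 1) * cc t (i + 2) * SS n (q - 1 - i) := by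
  rcases Nat.lt_or_ge t 2 with h1 | h2
  · have : t = 1 := by omega
    subst this
    apply Finset.sum_le_sum
    intro i hi
    rw [← mul_assoc]
    apply Nat.mul_le_mul_right
    apply Nat.mul_le_mul_right
    refine (hN i (Finset.mem_range.mp hi)).trans (le_of_eq ?_)
    unfold NN
    rw [Nat.choose_one_right, show i + 2 - 1 = i + 1 by omega]; ring
  · set K := q + 2 with hK
    have hfirst : (t + 2) ^ 2 * K * cc t 2 * SS n (q - 1) ≤
      ∑ i ∈ Finset.range q, (t + 2 + i) ^ 2 * K ^ (i + 1) * cc t (i + 2) * SS n (q - 1 - i) := by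
      have := Finset.single_le_sum
        (f := fun i => (t + 2 + i) ^ 2 * K ^ (i + 1) * cc t (i + 2) * SS n (q - 1 - i))
        (fun _ _ => Nat.zero_le _) (Finset.mem_range.mpr (show 0 < q by omega))
      simpa using this
    refine le_trans ?_ hfirst
    obtain ⟨E, hE⟩ : ∃ E, E + 1 = (t + 2) ^ 2 * K :=
      ⟨(t + 2) ^ 2 * K - 1, Nat.sub_add_cancel (Nat.mul_pos (by positivity) (by omega))⟩
    have hEpos : 0 < E := by
      have : 1 * 3 ≤ (t + 2) ^ 2 * K := Nat.mul_le_mul (Nat.one_le_pow _ _ (by omega)) (by omega)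
      omega
    set G := t ^ 2 + 5 * t + 8 with hG
    set h := t ^ 2 + 3 * t with hh
    have hcc : 2 * cc t 2 = G := cc_two t
    have r0 : G * E * SS n (q - 1) ≤ h * n.choose q := by
      have h3 : G * (E + 1) * SS n (q - 1) ≤ h * n.choose q + G * SS n (q - 1) := by
        calc G * (E + 1) * SS n (q - 1) = 2 * ((t + 2) ^ 2 * K * cc t 2 * SS n (q - 1)) := by
              rw [hE, ← hcc]; ring
          _ ≤ _ := (Nat.mul_le_mul_left 2 hfirst).trans hineq
      nlinarith
    have r1 : G * E * n.choose (q - 1) ≤ h * n.choose q := by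
      refine le_trans (Nat.mul_le_mul_left _ ?_) r0
      unfold SS
      exact Finset.single_le_sum (f := fun i => n.choose i) (fun _ _ => Nat.zero_le _)
        (Finset.mem_range.mpr (Nat.lt_succ_self (q - 1)))
    have r2 := SS_ratio n q (G * E) h (binom_ratio n q (G * E) h hq hqn r1)
    have hp := poly1 t K E (by omega) hE
    let a : ℕ → ℕ := fun i => NN t K (i + 2) * (cc t (i + 2) * SS n (q - 1 - i))
    have ha : ∀ i, i + 1 < q → 5 * a (i + 1) ≤ a i := by
      intro i hi
      have s1 := NN_step t K (i + 2) (by omega)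
      have s2 := cc_step t (i + 2) ht (by omega)
      have s3 := r2 (q - 1 - (i + 1)) (by omega)
      rw [show q - 1 - (i + 1) + 1 = q - 1 - i by omega] at s3
      simp only [a]
      rw [show i + 1 + 2 = i + 2 + 1 by ring]
      have hpos : 0 < 27 * G * E := by positivity
      apply Nat.le_of_mul_le_mul_left _ hpos
      have s4 := Nat.mul_le_mul s1 (Nat.mul_le_mul s2 s3)
      have s5 := Nat.mul_le_mul_right (NN t K (i + 2) * (cc t (i + 2) * SS n (q - 1 - i))) hp
      calc _ = 5 * (9 * NN t K (i + 2 + 1) *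
            (3 * cc t (i + 2 + 1) * (G * E * SS n (q - 1 - (i + 1))))) := by ring
        _ ≤ 5 * (4 * (t + 3) * K * NN t K (i + 2) *
            ((6 + t) * cc t (i + 2) * (h * SS n (q - 1 - i)))) := Nat.mul_le_mul_left _ s4
        _ = 20 * (t + 3) * (t + 6) * h * K * (NN t K (i + 2) * (cc t (i + 2) * SS n (q - 1 - i))) := by
            ring
        _ ≤ _ := s5
    have hg := geom_sum a q ha (q - 1) (by omega)
    obtain ⟨p, rfl⟩ : ∃ p, q = p + 1 := ⟨q - 1, by omega⟩
    rw [Finset.sum_range_succ']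
    simp only [show p + 1 - 1 = p by omega] at *
    have t1 : ∑ i ∈ Finset.range p, N (i + 1) * (cc t (i + 1 + 2) * SS n (p - (i + 1)))
        ≤ ∑ i ∈ Finset.range p, a (i + 1) := by
      apply Finset.sum_le_sum
      intro i hi
      rw [Finset.mem_range] at hi
      exact Nat.mul_le_mul_right _ (hN (i + 1) (by omega))
    have a0 : a 0 = 3 * (t + 2).choose 2 * K * (cc t 2 * SS n p) := by
      simp only [a, NN]
      have a1 : (t + 2).choose t = (t + 2).choose 2 := by
        exact Nat.choose_symm_add
      simp only [zero_add, a1, Nat.sub_zero, show p + 1 - 1 = p by omega, show 2 - 1 = 1 from rfl, pow_one]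
      ring
    have hp2 := Nat.mul_le_mul_right (cc t 2 * SS n p) (poly2 t K h2 (by omega))
    have t0 := Nat.mul_le_mul_right (cc t 2 * SS n p) hN0
    simp only [zero_add, Nat.sub_zero]
    have : (t + 2) ^ 2 * K * cc t 2 * SS n p = (t + 2) ^ 2 * K * (cc t 2 * SS n p) := by ring
    rw [this]
    rw [a0] at hg
    generalize cc t 2 * SS n p = Z at *
    have e5 : (4 * ((4 * t + 3) * K + t.choose 2) + 3 * (t + 2).choose 2 * K) * Z
      = 4 * (((4 * t + 3) * K + t.choose 2) * Z) + 3 * (t + 2).choose 2 * K * Z := by ring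
    have e6 : 4 * ((t + 2) ^ 2 * K) * Z = 4 * ((t + 2) ^ 2 * K * Z) := by ring
    rw [e5, e6] at hp2
    omega

lemma total_eq (n t q : ℕ) (ht : 1 ≤ t) (hq : 1 ≤ q) (hn : t + 2 ≤ n) :
    (t + 2).choose 2 * ∑ j ∈ Finset.range (q + 1), (n - t - 2).choose j
      + (t + 2) * ∑ j ∈ Finset.range q, (n - t - 2).choose j
      + ∑ j ∈ Finset.range (q - 1), (n - t - 2).choose j
    = ((n - t - 1).choose q
          + ((t + 2) * (t + 1) - 4) / 2 * (n - t - 2).choose q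
          + ((t + 3) * (t + 2) - 8) / 2 * ∑ j ∈ Finset.range q, (n - t - 2).choose j
          + ∑ j ∈ Finset.range (q - 1), (n - t - 2).choose j)
      + ∑ j ∈ Finset.range (q + 1), (n - t).choose j := by
  have hc := two_choose t
  have hsq : 1 ≤ t ^ 2 := Nat.one_le_pow _ _ ht
  have e1 : ((t + 2) * (t + 1) - 4) / 2 + 2 = (t + 2).choose 2 := by
    have : t ^ 2 + 3 * t + 2 = (t + 2) * (t + 1) := by ring
    omega
  have e2 : ((t + 3) * (t + 2) - 8) / 2 + 4 = (t + 2).choose 2 + (t + 2) := by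
    have : (t + 3) * (t + 2) = (t + 2) * (t + 1) + 2 * (t + 2) := by ring
    have : t ^ 2 + 3 * t + 2 = (t + 2) * (t + 1) := by ring
    omega
  rw [← e1] at e2 ⊢
  generalize ((t + 2) * (t + 1) - 4) / 2 = u at *
  generalize ((t + 3) * (t + 2) - 8) / 2 = v at *
  obtain ⟨m, rfl⟩ : ∃ m, n = m + t + 2 := ⟨n - t - 2, by omega⟩
  obtain ⟨p, rfl⟩ : ∃ p, q = p + 1 := ⟨q - 1, by omega⟩
  rw [show m + t + 2 - t - 1 = m + 1 by omega, show m + t + 2 - t - 2 = m by omega,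
    show m + t + 2 - t = m + 2 by omega, show p + 1 - 1 = p by omega]
  have hs : ∀ a r, ∑ j ∈ Finset.range (r + 1), (a + 1).choose j
      = ∑ j ∈ Finset.range (r + 1), a.choose j + ∑ j ∈ Finset.range r, a.choose j := by
    intro a r
    rw [Finset.sum_range_succ', Finset.sum_range_succ' (fun j => a.choose j)]
    simp only [Nat.choose_succ_succ', Finset.sum_add_distrib, Nat.choose_zero_right]
    ring
  rw [show m + 2 = m + 1 + 1 by ring, hs (m + 1) (p + 1), hs m (p + 1), hs m p,
    Nat.choose_succ_succ' m p]
  simp only [Finset.sum_range_succ]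
  generalize ∑ j ∈ Finset.range p, m.choose j = Z
  have hv : v = u + t := by omega
  subst hv
  ring

theorem stmt15 (n k t : ℕ) (ht : 1 ≤ t) (hk : t + 2 ≤ k) (hn : 2 * k ≤ n)
    (hineq : ∑ ℓ ∈ Finset.Icc (t + 2) k,
          ℓ ^ 2 * (k - t + 1) ^ (ℓ - t - 1)
            * (∑ i ∈ Finset.Icc t ℓ, ℓ.choose i)
            * (∑ j ∈ Finset.range (k - ℓ + 1), n.choose j)
        ≤ (n - t - 1).choose (k - t - 1)
          + ((t + 2) * (t + 1) - 4) / 2 * (n - t - 2).choose (k - t - 1)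
          + ((t + 3) * (t + 2) - 8) / 2 * ∑ j ∈ Finset.range (k - t - 1), (n - t - 2).choose j
          + ∑ j ∈ Finset.range (k - t - 2), (n - t - 2).choose j) :
    ∀ F ⊆ (Finset.Icc 1 n).powersetCard k, tIntersecting t F →
      (interFam F).card ≤ (interFam (At n k t)).card := by
  classical
  intro F0 hF0 hT0
  obtain ⟨F, hF, hFF, hT, hsat⟩ := exists_sat n k t (by omega) F0 hF0 hT0
  refine (Finset.card_le_card (interFam_mono hFF)).trans ?_
  refine le_trans ?_ (Finset.card_le_card (patt_sub_At n k t hk hn))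
  have hY0 : Finset.Icc 1 (t + 2) ⊆ Finset.Icc 1 n := Finset.Icc_subset_Icc_right (by omega)
  rw [patt_card n k t hk _ hY0 (by simp)]
  have hint : ∀ P ∈ transv n k t F, ∀ Q ∈ transv n k t F, t ≤ (P ∩ Q).card :=
    fun P hP Q hQ => transv_inter n k t hn F hT hsat P Q hP hQ
  by_cases hc1 : common n k t F (t + 1)
  swap
  · obtain ⟨Y, hYU, hYc, hYA⟩ := triple n k t ht F hint hc1
    rw [← patt_card n k t hk Y hYU hYc]
    exact Finset.card_le_card (inter_sub_patt n k t hk F hF Y hYc hYA)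
  set a := Nat.findGreatest (fun l => common n k t F l) k with ha
  have ha1 : t + 1 ≤ a := Nat.le_findGreatest (by omega) hc1
  have ha2 : common n k t F a := Nat.findGreatest_spec (P := fun l => common n k t F l)
    (show t + 1 ≤ k by omega) hc1
  have ha3 : ∀ l, a < l → l ≤ k → ¬ common n k t F l := fun l h1 h2 =>
    Nat.findGreatest_is_greatest h1 h2
  refine (cover n k t a ht hk F hF hT ha1 ha2).trans ?_
  obtain ⟨q, rfl⟩ : ∃ q, k = t + 1 + q := ⟨k - t - 1, by omega⟩
  have hq : 1 ≤ q := by omega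
  have hconv : ∀ f : ℕ → ℕ, ∑ l ∈ Finset.Icc (t + 2) (t + 1 + q), f l
      = ∑ i ∈ Finset.range q, f (t + 2 + i) := by
    intro f
    rw [← Finset.Ico_add_one_right_eq_Icc, Finset.sum_Ico_eq_sum_range]
    congr 2; omega
  rw [Finset.sum_filter, hconv]
  rw [hconv] at hineq
  rw [show t + 1 + q - t = q + 1 by omega] at hineq ⊢
  rw [show q + 1 - 1 = q by omega, show q + 1 - 2 = q - 1 by omega] at hineq ⊢
  have hL : ∑ i ∈ Finset.range q, (t + 2 + i) ^ 2 * (q + 1 + 1) ^ (t + 2 + i - t - 1)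
            * (∑ i_1 ∈ Finset.Icc t (t + 2 + i), (t + 2 + i).choose i_1)
            * (∑ j ∈ Finset.range (t + 1 + q - (t + 2 + i) + 1), n.choose j)
      = ∑ i ∈ Finset.range q, (t + 2 + i) ^ 2 * (q + 2) ^ (i + 1) * cc t (i + 2) * SS n (q - 1 - i) := by
    apply Finset.sum_congr rfl
    intro i hi
    rw [Finset.mem_range] at hi
    rw [show t + 2 + i - t - 1 = i + 1 by omega,
      show t + 1 + q - (t + 2 + i) = q - 1 - i by omega, ← cc_eq,
      show t + (i + 2) = t + 2 + i by ring]
    rfl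
  rw [hL] at hineq
  rw [total_eq n t q ht hq (by omega), add_comm]
  refine Nat.add_le_add_right (le_trans ?_ hineq) _
  let N : ℕ → ℕ := fun i => if a < t + 2 + i then (minT n (t + 1 + q) t F (t + 2 + i)).card else 0
  have har := arith n t q ht hq (by omega) N (by
      intro i hi
      simp only [N]
      split_ifs with h
      · have := bound_gen n (t + 1 + q) t ht (by omega) F hF hint (t + 2 + i) (by omega)
          (ha3 _ h (by omega))
        refine this.trans (le_of_eq ?_)
        unfold NN
        rw [show t + 2 + i - t + 1 = i + 2 + 1 by omega, show t + 1 + q - t + 1 = q + 2 by omega,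
          show t + 2 + i - t - 1 = i + 2 - 1 by omega, show t + (i + 2) = t + 2 + i by ring]
      · exact Nat.zero_le _)
    (by
      simp only [N]
      split_ifs with h
      · have := bound_two n (t + 1 + q) t ht (by omega) F hF hint
          (ha3 _ h (by omega))
        rw [show t + 1 + q - t + 1 = q + 2 by omega] at this
        exact this
      · exact Nat.zero_le _)
    ((Nat.mul_le_mul_left 2 hineq).trans (rhs_bound n t q ht hq))
  refine le_trans (le_of_eq ?_) har
  apply Finset.sum_congr rfl
  intro i hi
  rw [Finset.mem_range] at hi
  simp only [N]
  split_ifs with h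
  · rw [show t + 1 + q - (t + 2 + i) = q - 1 - i by omega, ← cc_eq,
      show t + (i + 2) = t + 2 + i by ring]
    rfl
  · simp
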